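/- The fractional cost of the adjusted correlation metric f in the ℓ∞-norm objective is at most 56 times the optimum: max_{u∈V} [ Σ_{v∈N_u^+} f_uv + Σ_{v∈N_u^-} (1 − f_uv) ] ≤ 56 · OPT(∞). -/

import Mathlib

/-!
Fix an optimal clustering, given by `c`, and put `k = OPT(∞)`. The disagreements at a vertex `w` are
exactly the elements of the symmetric difference of `N_w⁺` and `C(w)`, so `|N_w⁺ ∆ C(w)| ≤ k` for
every `w` (`symmDiff_card`).

The main tool is a double count (`sum_inter_le`): if `S` avoids `C(u)`, then
`∑_{v ∈ S} |N_u⁺ ∩ N_v⁺| ≤ Δ_u k + k |S|`. A common neighbour `w ∈ C(u)` of `u` and `v` makes `(w, v)`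
a disagreement at `w`, and each `w` has at most `k` of those, while at most `k` vertices of `N_u⁺` lie
outside `C(u)`.

* If `u ∈ R₁`, applying this to the negative neighbours of `u` outside `C(u)` at distance at most
  `0.7`, each of which has at least `0.3 Δ_u` neighbours in common with `u`, gives `Δ_u ≤ 5k`
  (`card_le_of_mem_R1`).
* Positive edges cost at most `7k` (`pos_cost`). At most `k` of them leave `C(u)`. If `C(u)` meets
  `R₁` then `|C(u)| ≤ 6k`; otherwise `f = d ≤ 2k / Δ_u` on each of the at most `Δ_u` remaining ones.
* Negative edges cost at most `6k` (`neg_cost`). If `u ∈ R₁` they cost nothing. Otherwise at most `k`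
  of them lie inside `C(u)`, and the others of nonzero cost form a set `S` with `|S| ≤ (10/3) Δ_u`;
  since `1 - d_uv ≤ |N_u⁺ ∩ N_v⁺| / Δ_u`, the double count bounds their cost by `(1 + 10/3) k`.

The sum is at most `13k`, well within the claimed `56k`.
-/

open Finset

noncomputable section

variable {V : Type*} [Fintype V] [DecidableEq V]

/-- Positive neighborhood of `u` (including the positive self-loop at `u`). -/
def Nplus (E : V → V → Prop) [DecidableRel E] (u : V) : Finset V :=
  insert u (Finset.univ.filter fun v => v ≠ u ∧ E u v)

/-- Negative neighborhood of `u`. -/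
def Nminus (E : V → V → Prop) [DecidableRel E] (u : V) : Finset V :=
  Finset.univ.filter fun v => v ≠ u ∧ ¬ E u v

/-- The correlation metric `d`. -/
def corrDist (E : V → V → Prop) [DecidableRel E] (u v : V) : ℝ :=
  if u = v then 0
  else 1 - ((Nplus E u ∩ Nplus E v).card : ℝ) / ((Nplus E u ∪ Nplus E v).card : ℝ)

/-- The set `R₁` of vertices `u` with `|N_u^- ∩ {v : d_uv ≤ 0.7}| ≥ (10/3)·Δ_u`. -/
def R1set (E : V → V → Prop) [DecidableRel E] : Finset V :=
  Finset.univ.filter fun u =>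
    (10 / 3 : ℝ) * (Nplus E u).card ≤ ((Nminus E u).filter fun v => corrDist E u v ≤ 0.7).card

/-- The adjusted correlation metric `f`: start from `d`, round negative edges with
`d > 0.7` up to `1`, and set `f_uv = 1` for all `v ≠ u` whenever `u ∈ R₁`. -/
def adjDist (E : V → V → Prop) [DecidableRel E] (u v : V) : ℝ :=
  if u = v then 0
  else if u ∈ R1set E ∨ v ∈ R1set E then 1
  else if ¬ E u v ∧ 0.7 < corrDist E u v then 1
  else corrDist E u v

/-- A clustering is encoded by a map `c : V → V`; the cluster `C(u)` is the fiber of `c` at `u`. -/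
def clusterOf (c : V → V) (u : V) : Finset V :=
  Finset.univ.filter fun w => c w = c u

/-- The number of disagreements incident to `u` with respect to the clustering `c`. -/
def disag (E : V → V → Prop) [DecidableRel E] (c : V → V) (u : V) : ℕ :=
  (Finset.univ.filter fun v =>
    v ≠ u ∧ ((E u v ∧ c u ≠ c v) ∨ (¬ E u v ∧ c u = c v))).card

/-- `OPT(1)`: the minimum total number of disagreements over all clusterings. -/
def OPT1 (E : V → V → Prop) [DecidableRel E] : ℕ :=
  Finset.univ.inf' ⟨id, Finset.mem_univ id⟩ fun c : V → V => ∑ u, disag E c u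

/-- `OPT(p)`: the minimum `ℓ_p`-norm of the disagreement vector over all clusterings. -/
def OPTlp (E : V → V → Prop) [DecidableRel E] (p : ℝ) : ℝ :=
  Finset.univ.inf' ⟨id, Finset.mem_univ id⟩ fun c : V → V =>
    (∑ u, (disag E c u : ℝ) ^ p) ^ (1 / p)

/-- `OPT(∞)`: the minimum `ℓ_∞`-norm of the disagreement vector over all clusterings. -/
def OPTinf (E : V → V → Prop) [DecidableRel E] : ℕ :=
  Finset.univ.inf' ⟨id, Finset.mem_univ id⟩ fun c : V → V => Finset.univ.sup (disag E c)

/-- The set of bad triangles: triples of distinct vertices spanning exactly two positive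
edges and one negative edge. -/
def badTriangles (E : V → V → Prop) [DecidableRel E] : Finset (Finset V) :=
  Finset.univ.filter fun T =>
    ∃ u v w : V, u ≠ v ∧ u ≠ w ∧ v ≠ w ∧ T = {u, v, w} ∧ E u v ∧ E u w ∧ ¬ E v w

/-! ### Neighborhoods and clusters -/

lemma mem_Nplus (E : V → V → Prop) [DecidableRel E] (u v : V) :
    v ∈ Nplus E u ↔ v = u ∨ E u v := by
  by_cases h : v = u <;> simp [Nplus, h]

lemma mem_Nplus_comm (E : V → V → Prop) [DecidableRel E]
    (hsymm : ∀ u v, E u v ↔ E v u) (u v : V) :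
    v ∈ Nplus E u ↔ u ∈ Nplus E v := by
  rw [mem_Nplus, mem_Nplus, hsymm u v, eq_comm]

lemma card_Nplus_pos (E : V → V → Prop) [DecidableRel E] (u : V) :
    (0 : ℝ) < (Nplus E u).card := by
  have : 0 < (Nplus E u).card := Finset.card_pos.mpr ⟨u, by simp [mem_Nplus]⟩
  exact_mod_cast this

lemma symmDiff_card (E : V → V → Prop) [DecidableRel E] (c : V → V) (u : V) :
    (symmDiff (Nplus E u) (clusterOf c u)).card = disag E c u := by
  unfold disag
  congr 1
  ext v
  simp only [Finset.mem_symmDiff, mem_Nplus, clusterOf, Finset.mem_filter, Finset.mem_univ,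
    true_and]
  by_cases h : v = u
  · simp [h]
  · simp only [h, false_or, ne_eq, not_false_eq_true, true_and, eq_comm (a := c u)]
    tauto

lemma card_le_of_subset_symmDiff {E : V → V → Prop} [DecidableRel E] {c : V → V} {k : ℕ}
    (hk : ∀ w, disag E c w ≤ k) {u : V} {S : Finset V}
    (hS : S ⊆ symmDiff (Nplus E u) (clusterOf c u)) : (S.card : ℝ) ≤ k := by
  have := (Finset.card_le_card hS).trans ((symmDiff_card E c u).le.trans (hk u))
  exact_mod_cast this

/-! ### Counting common neighbours outside the cluster -/

/-- The double count: common neighbours of `u` with vertices `v` outside the cluster of `u` are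
paid for by disagreements, either at the common neighbour or at `u`. -/
lemma sum_inter_le (E : V → V → Prop) [DecidableRel E] (hsymm : ∀ u v, E u v ↔ E v u)
    (c : V → V) (k : ℕ) (hk : ∀ w, disag E c w ≤ k) (u : V) (S : Finset V)
    (hS : ∀ v ∈ S, c v ≠ c u) :
    ∑ v ∈ S, ((Nplus E u ∩ Nplus E v).card : ℝ) ≤ (Nplus E u).card * k + k * S.card := by
  set A := (Nplus E u).filter fun w => c w = c u with hA
  set B := (Nplus E u).filter fun w => ¬ c w = c u with hB
  have hBk : (B.card : ℝ) ≤ k := by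
    refine card_le_of_subset_symmDiff hk (u := u) fun w hw => ?_
    simp only [hB, Finset.mem_filter] at hw
    simp [Finset.mem_symmDiff, clusterOf, hw]
  have h1 : ∀ v ∈ S, ((Nplus E u ∩ Nplus E v).card : ℝ) ≤
      ((A.filter fun w => w ∈ Nplus E v).card : ℝ) + k := by
    intro v _
    have : (Nplus E u ∩ Nplus E v).card ≤ (A.filter fun w => w ∈ Nplus E v).card + B.card := by
      refine (Finset.card_le_card fun w hw => ?_).trans (Finset.card_union_le _ _)
      simp only [Finset.mem_inter] at hw
      simp only [hA, hB, Finset.mem_union, Finset.mem_filter]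
      tauto
    have : ((Nplus E u ∩ Nplus E v).card : ℝ) ≤
        ((A.filter fun w => w ∈ Nplus E v).card : ℝ) + B.card := by exact_mod_cast this
    linarith
  have h2 : ∑ v ∈ S, ((A.filter fun w => w ∈ Nplus E v).card : ℝ)
      = ∑ w ∈ A, ((S.filter fun v => w ∈ Nplus E v).card : ℝ) := by
    have := Finset.sum_card_bipartiteAbove_eq_sum_card_bipartiteBelow
      (s := S) (t := A) (fun v w => w ∈ Nplus E v)
    simp only [Finset.bipartiteAbove, Finset.bipartiteBelow] at this
    exact_mod_cast this
  have h3 : ∑ w ∈ A, ((S.filter fun v => w ∈ Nplus E v).card : ℝ) ≤ A.card * k := by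
    rw [← nsmul_eq_mul]
    refine Finset.sum_le_card_nsmul _ _ _ fun w hw => ?_
    refine card_le_of_subset_symmDiff hk (u := w) fun v hv => ?_
    simp only [hA, Finset.mem_filter] at hw hv
    have := hS v hv.1
    rw [Finset.mem_symmDiff]
    left
    refine ⟨(mem_Nplus_comm E hsymm w v).2 hv.2, ?_⟩
    simpa [clusterOf, hw.2] using this
  have h4 : (A.card : ℝ) ≤ (Nplus E u).card := by
    exact_mod_cast Finset.card_le_card (Finset.filter_subset _ _)
  calc ∑ v ∈ S, ((Nplus E u ∩ Nplus E v).card : ℝ)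
      ≤ ∑ v ∈ S, (((A.filter fun w => w ∈ Nplus E v).card : ℝ) + k) := Finset.sum_le_sum h1
    _ = ∑ w ∈ A, ((S.filter fun v => w ∈ Nplus E v).card : ℝ) + S.card * k := by
        rw [Finset.sum_add_distrib, h2]; simp
    _ ≤ (Nplus E u).card * k + k * S.card := by
        have := mul_le_mul_of_nonneg_right h4 (Nat.cast_nonneg (α := ℝ) k)
        linarith

/-! ### Bounds on the metrics -/

lemma card_Nplus_le_card_union (E : V → V → Prop) [DecidableRel E] (u v : V) :
    ((Nplus E u).card : ℝ) ≤ (Nplus E u ∪ Nplus E v).card := by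
  exact_mod_cast Finset.card_le_card Finset.subset_union_left

lemma one_sub_corrDist_le (E : V → V → Prop) [DecidableRel E] {u v : V} (h : u ≠ v) :
    1 - corrDist E u v ≤ (Nplus E u ∩ Nplus E v).card / (Nplus E u).card := by
  rw [corrDist, if_neg h, sub_sub_cancel]
  exact div_le_div_of_nonneg_left (by positivity) (card_Nplus_pos E u)
    (card_Nplus_le_card_union E u v)

lemma corrDist_le_one (E : V → V → Prop) [DecidableRel E] (u v : V) : corrDist E u v ≤ 1 := by
  unfold corrDist
  split_ifs
  · norm_num
  · have : (0 : ℝ) ≤ ((Nplus E u ∩ Nplus E v).card : ℝ) / ((Nplus E u ∪ Nplus E v).card : ℝ) := by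
      positivity
    linarith

lemma corrDist_nonneg (E : V → V → Prop) [DecidableRel E] (u v : V) : 0 ≤ corrDist E u v := by
  unfold corrDist
  split_ifs
  · exact le_rfl
  · rw [sub_nonneg]
    refine div_le_one_of_le₀ ?_ (by positivity)
    exact_mod_cast Finset.card_le_card
      (Finset.inter_subset_left.trans Finset.subset_union_left)

lemma adjDist_le_one (E : V → V → Prop) [DecidableRel E] (u v : V) : adjDist E u v ≤ 1 := by
  unfold adjDist
  split_ifs
  · norm_num
  · exact le_rfl
  · exact le_rfl
  · exact corrDist_le_one E u v

lemma corrDist_le_adjDist (E : V → V → Prop) [DecidableRel E] (u v : V) :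
    corrDist E u v ≤ adjDist E u v := by
  unfold adjDist
  split_ifs with h
  · simp [corrDist, h]
  · exact corrDist_le_one E u v
  · exact corrDist_le_one E u v
  · exact le_rfl

/-- Two vertices of the same cluster have nearly the same positive neighbourhood, as both
neighbourhoods are close to the cluster. -/
lemma corrDist_le_of_cluster (E : V → V → Prop) [DecidableRel E]
    (c : V → V) (k : ℕ) (hk : ∀ w, disag E c w ≤ k) {u v : V} (h : c v = c u) :
    corrDist E u v ≤ 2 * k / (Nplus E u).card := by
  unfold corrDist
  split_ifs
  · positivity
  have hU : (0 : ℝ) < (Nplus E u ∪ Nplus E v).card :=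
    (card_Nplus_pos E u).trans_le (card_Nplus_le_card_union E u v)
  have hC : clusterOf c v = clusterOf c u := by simp [clusterOf, h]
  have h1 : (Nplus E u ∪ Nplus E v).card ≤ (Nplus E u ∩ Nplus E v).card + 2 * k := by
    have hs : Nplus E u ∪ Nplus E v ⊆ (Nplus E u ∩ Nplus E v) ∪
        (symmDiff (Nplus E u) (clusterOf c u) ∪ symmDiff (Nplus E v) (clusterOf c v)) := by
      intro w
      rw [hC]
      simp only [Finset.mem_union, Finset.mem_inter, Finset.mem_symmDiff]
      tauto
    have a := (Finset.card_le_card hs).trans (Finset.card_union_le _ _)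
    have b := Finset.card_union_le (symmDiff (Nplus E u) (clusterOf c u))
      (symmDiff (Nplus E v) (clusterOf c v))
    rw [symmDiff_card, symmDiff_card] at b
    have := hk u
    have := hk v
    omega
  have h1' : ((Nplus E u ∪ Nplus E v).card : ℝ) ≤ (Nplus E u ∩ Nplus E v).card + 2 * k := by
    exact_mod_cast h1
  calc 1 - ((Nplus E u ∩ Nplus E v).card : ℝ) / (Nplus E u ∪ Nplus E v).card
      = (((Nplus E u ∪ Nplus E v).card : ℝ) - (Nplus E u ∩ Nplus E v).card) /
          (Nplus E u ∪ Nplus E v).card := by field_simp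
    _ ≤ 2 * k / (Nplus E u ∪ Nplus E v).card := by
        gcongr
        linarith
    _ ≤ 2 * k / (Nplus E u).card :=
        div_le_div_of_nonneg_left (by positivity) (card_Nplus_pos E u)
          (card_Nplus_le_card_union E u v)

/-! ### Fractional cost at a vertex -/

lemma neg_inside_card_le {E : V → V → Prop} [DecidableRel E]
    {c : V → V} {k : ℕ} (hk : ∀ w, disag E c w ≤ k) (u : V) :
    (((Nminus E u).filter fun v => c v = c u).card : ℝ) ≤ k := by
  refine card_le_of_subset_symmDiff hk (u := u) fun v hv => ?_
  simp only [Nminus, Finset.mem_filter, Finset.mem_univ, true_and] at hv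
  simp [Finset.mem_symmDiff, clusterOf, mem_Nplus, hv]

/-- Vertices of `R₁` have small degree. -/
lemma card_le_of_mem_R1 (E : V → V → Prop) [DecidableRel E] (hsymm : ∀ u v, E u v ↔ E v u)
    (c : V → V) (k : ℕ) (hk : ∀ w, disag E c w ≤ k) {u : V} (hu : u ∈ R1set E) :
    ((Nplus E u).card : ℝ) ≤ 5 * k := by
  simp only [R1set, Finset.mem_filter, Finset.mem_univ, true_and] at hu
  set T := (Nminus E u).filter fun v => corrDist E u v ≤ 0.7 with hT
  set S := T.filter fun v => ¬ c v = c u with hS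
  have hTS : (T.card : ℝ) ≤ S.card + k := by
    have h1 := Finset.card_filter_add_card_filter_not (s := T) (fun v => c v = c u)
    have h2 := neg_inside_card_le hk u
    have h3 : (T.filter fun v => c v = c u).card ≤
        ((Nminus E u).filter fun v => c v = c u).card :=
      Finset.card_le_card (Finset.filter_subset_filter _ (Finset.filter_subset _ _))
    have h3' : ((T.filter fun v => c v = c u).card : ℝ) ≤
        ((Nminus E u).filter fun v => c v = c u).card := by exact_mod_cast h3
    have h1' : ((T.filter fun v => c v = c u).card : ℝ) + S.card = T.card := by exact_mod_cast h1
    linarith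
  have hsum := sum_inter_le E hsymm c k hk u S fun v hv => (Finset.mem_filter.1 hv).2
  have hΔ := card_Nplus_pos E u
  have hlow : (S.card : ℝ) * (0.3 * (Nplus E u).card) ≤
      ∑ v ∈ S, ((Nplus E u ∩ Nplus E v).card : ℝ) := by
    rw [← nsmul_eq_mul]
    refine Finset.card_nsmul_le_sum _ _ _ fun v hv => ?_
    simp only [hS, hT, Nminus, Finset.mem_filter, Finset.mem_univ, true_and] at hv
    have h1 := one_sub_corrDist_le E (Ne.symm hv.1.1.1)
    rw [← le_div_iff₀ hΔ]
    linarith [hv.1.2]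
  set Δ : ℝ := ((Nplus E u).card : ℝ)
  set M : ℝ := (S.card : ℝ)
  have hk0 : (0 : ℝ) ≤ k := Nat.cast_nonneg k
  by_contra! hcon
  -- If `Δ > 5k`, then `M ≥ (10/3)Δ - k ≥ 3Δ`, so `3Δ(0.3Δ - k) ≤ M(0.3Δ - k) ≤ Δk`.
  have hM : 3 * Δ ≤ M := by linarith
  have ha : 0 ≤ 0.3 * Δ - k := by linarith
  have h5 : 3 * Δ * (0.3 * Δ - k) ≤ M * (0.3 * Δ - k) := mul_le_mul_of_nonneg_right hM ha
  have h6 : Δ * (3 * (0.3 * Δ - k)) ≤ Δ * k := by linarith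
  have h7 := le_of_mul_le_mul_left h6 hΔ
  linarith

lemma pos_cost (E : V → V → Prop) [DecidableRel E] (hsymm : ∀ u v, E u v ↔ E v u)
    (c : V → V) (k : ℕ) (hk : ∀ w, disag E c w ≤ k) (u : V) :
    ∑ v ∈ Nplus E u, adjDist E u v ≤ 7 * k := by
  have hk0 : (0 : ℝ) ≤ k := Nat.cast_nonneg k
  rw [← Finset.sum_filter_add_sum_filter_not (Nplus E u) (fun v => c v = c u)]
  have hout : ∑ v ∈ (Nplus E u).filter (fun v => ¬ c v = c u), adjDist E u v ≤ k := by
    calc _ ≤ (((Nplus E u).filter (fun v => ¬ c v = c u)).card : ℝ) := by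
          simpa using Finset.sum_le_card_nsmul _ _ 1 fun v _ => adjDist_le_one E u v
      _ ≤ k := by
          refine card_le_of_subset_symmDiff hk (u := u) fun w hw => ?_
          simp only [Finset.mem_filter] at hw
          simp [Finset.mem_symmDiff, clusterOf, hw]
  have hin : ∑ v ∈ (Nplus E u).filter (fun v => c v = c u), adjDist E u v ≤ 6 * k := by
    by_cases hR : ∃ v ∈ R1set E, c v = c u
    · obtain ⟨v, hv, hvu⟩ := hR
      have hΔ := card_le_of_mem_R1 E hsymm c k hk hv
      have h1 : ((Nplus E u).filter fun w => c w = c u).card ≤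
          (Nplus E v).card + (symmDiff (Nplus E v) (clusterOf c v)).card := by
        refine (Finset.card_le_card fun w hw => ?_).trans (Finset.card_union_le _ _)
        have hw' : w ∈ clusterOf c v := by simp [clusterOf, (Finset.mem_filter.1 hw).2, hvu]
        simp only [Finset.mem_union, Finset.mem_symmDiff]
        tauto
      rw [symmDiff_card] at h1
      have h2 : (((Nplus E u).filter fun w => c w = c u).card : ℝ) ≤ (Nplus E v).card + k := by
        exact_mod_cast h1.trans (Nat.add_le_add_left (hk v) _)
      calc _ ≤ (((Nplus E u).filter fun w => c w = c u).card : ℝ) := by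
            simpa using Finset.sum_le_card_nsmul _ _ 1 fun v _ => adjDist_le_one E u v
        _ ≤ 6 * k := by linarith
    · push Not at hR
      have hΔ := card_Nplus_pos E u
      have hle : ∀ v ∈ (Nplus E u).filter (fun v => c v = c u),
          adjDist E u v ≤ 2 * k / (Nplus E u).card := by
        intro v hv
        simp only [Finset.mem_filter, mem_Nplus] at hv
        have hd := corrDist_le_of_cluster E c k hk hv.2
        have hu : u ∉ R1set E := fun h => hR u h rfl
        have hv' : v ∉ R1set E := fun h => hR v h hv.2
        by_cases huv : u = v
        · simp only [adjDist, huv, if_true]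
          positivity
        · have hE : E u v := hv.1.resolve_left (Ne.symm huv)
          simpa [adjDist, huv, hu, hv', hE] using hd
      calc _ ≤ (((Nplus E u).filter fun w => c w = c u).card : ℝ) *
              (2 * k / (Nplus E u).card) := by
            simpa using Finset.sum_le_card_nsmul _ _ _ hle
        _ ≤ (Nplus E u).card * (2 * k / (Nplus E u).card) := by
            gcongr
            exact Finset.filter_subset _ _
        _ = 2 * k := by field_simp
        _ ≤ 6 * k := by linarith
  linarith

lemma neg_cost (E : V → V → Prop) [DecidableRel E] (hsymm : ∀ u v, E u v ↔ E v u)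
    (c : V → V) (k : ℕ) (hk : ∀ w, disag E c w ≤ k) (u : V) :
    ∑ v ∈ Nminus E u, (1 - adjDist E u v) ≤ 6 * k := by
  have hk0 : (0 : ℝ) ≤ k := Nat.cast_nonneg k
  by_cases hu : u ∈ R1set E
  · have : ∑ v ∈ Nminus E u, (1 - adjDist E u v) = 0 := by
      refine Finset.sum_eq_zero fun v hv => ?_
      simp only [Nminus, Finset.mem_filter, Finset.mem_univ, true_and] at hv
      simp [adjDist, Ne.symm hv.1, hu]
    rw [this]
    positivity
  rw [← Finset.sum_filter_add_sum_filter_not (Nminus E u) (fun v => c v = c u)]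
  have hin : ∑ v ∈ (Nminus E u).filter (fun v => c v = c u), (1 - adjDist E u v) ≤ k := by
    refine le_trans ?_ (neg_inside_card_le hk u)
    have := Finset.sum_le_card_nsmul ((Nminus E u).filter (fun v => c v = c u))
      (fun v => 1 - adjDist E u v) 1 fun v _ => by
        linarith [corrDist_nonneg E u v, corrDist_le_adjDist E u v]
    simpa using this
  -- Only the vertices at distance at most `0.7` contribute outside the cluster.
  set S := ((Nminus E u).filter fun v => ¬ c v = c u).filter fun v => corrDist E u v ≤ 0.7 with hS
  have hΔ := card_Nplus_pos E u
  have hScard : (S.card : ℝ) ≤ 10 / 3 * (Nplus E u).card := by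
    simp only [R1set, Finset.mem_filter, Finset.mem_univ, true_and, not_le] at hu
    refine le_trans ?_ hu.le
    exact_mod_cast Finset.card_le_card
      (Finset.filter_subset_filter _ (Finset.filter_subset _ _))
  have hsum := sum_inter_le E hsymm c k hk u S fun v hv =>
    (Finset.mem_filter.1 (Finset.mem_filter.1 hv).1).2
  have hout : ∑ v ∈ (Nminus E u).filter (fun v => ¬ c v = c u), (1 - adjDist E u v) ≤
      13 / 3 * k := by
    calc _ = ∑ v ∈ S, (1 - adjDist E u v) := by
          symm
          refine Finset.sum_subset (Finset.filter_subset _ _) fun v hv hvS => ?_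
          have hd : 0.7 < corrDist E u v := by
            by_contra! h
            exact hvS (Finset.mem_filter.2 ⟨hv, h⟩)
          simp only [Nminus, Finset.mem_filter, Finset.mem_univ, true_and] at hv
          simp [adjDist, Ne.symm hv.1.1, hv.1.2, hd]
      _ ≤ ∑ v ∈ S, ((Nplus E u ∩ Nplus E v).card : ℝ) / (Nplus E u).card := by
          refine Finset.sum_le_sum fun v hv => ?_
          simp only [hS, Nminus, Finset.mem_filter, Finset.mem_univ, true_and] at hv
          linarith [corrDist_le_adjDist E u v, one_sub_corrDist_le E (Ne.symm hv.1.1.1)]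
      _ ≤ 13 / 3 * k := by
          rw [← Finset.sum_div, div_le_iff₀ hΔ]
          have := mul_le_mul_of_nonneg_left hScard hk0
          linarith
  linarith

/-- the fractional cost of the adjusted correlation metric in the
`ℓ_∞`-norm objective is at most `56 · OPT(∞)`. -/
theorem linf_frac_cost (E : V → V → Prop) [DecidableRel E] [Nonempty V]
    (hsymm : ∀ u v, E u v ↔ E v u) :
    Finset.univ.sup' Finset.univ_nonempty (fun u : V =>
        (∑ v ∈ Nplus E u, adjDist E u v) + ∑ v ∈ Nminus E u, (1 - adjDist E u v)) ≤
      56 * (OPTinf E : ℝ) := by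
  obtain ⟨c, -, hc⟩ := Finset.exists_mem_eq_inf' (s := (Finset.univ : Finset (V → V)))
    ⟨id, Finset.mem_univ id⟩ fun c : V → V => Finset.univ.sup (disag E c)
  have hk : ∀ w, disag E c w ≤ OPTinf E := fun w => by
    rw [OPTinf, hc]
    exact Finset.le_sup (f := disag E c) (Finset.mem_univ w)
  refine Finset.sup'_le _ _ fun u _ => ?_
  have h0 : (0 : ℝ) ≤ OPTinf E := Nat.cast_nonneg _
  linarith [pos_cost E hsymm c _ hk u, neg_cost E hsymm c _ hk u]
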